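/- The principal minor ideal J_n is a complete intersection: it is generated by the c_n principal 2-minors and has height (codimension) exactly c_n in k[x]; equivalently, the Krull dimension of k[x]/J_n equals n, which is also the height of the second Veronese ideal I_n, so that J_n ⊆ I_n is a complete intersection of the same codimension. -/

import Mathlib

open scoped BigOperators

namespace Veronese

open MvPolynomial

/-- `c m = C(m,2)`. -/
def c (m : ℕ) : ℕ := m.choose 2

variable (n : ℕ)

/-- multiplicity (as ℤ) of the index `i` in the unordered pair `s`. -/
def wt (s : Sym2 (Fin n)) : Fin n → ℤ :=
  Sym2.lift ⟨fun a b i => (if i = a then 1 else 0) + (if i = b then 1 else 0),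
    fun a b => funext fun i => add_comm _ _⟩ s

/-- The Veronese grading map `V_n : ℤ^P → ℤ^n`, sending `e_{ij} ↦ e_i + e_j`. -/
def Vmap : (Sym2 (Fin n) → ℤ) →ₗ[ℤ] (Fin n → ℤ) where
  toFun u := fun i => ∑ s : Sym2 (Fin n), u s * wt n s i
  map_add' u v := funext fun i => by
    simp [add_mul, Finset.sum_add_distrib]
  map_smul' m u := funext fun i => by
    simp [Finset.mul_sum, smul_eq_mul, mul_assoc]

/-- The Veronese lattice `L_n = ker V_n`. -/
def Llat : Submodule ℤ (Sym2 (Fin n) → ℤ) := LinearMap.ker (Vmap n)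

/-- standard basis vector `e_{ij}` of `ℤ^P`. -/
def e (i j : Fin n) : Sym2 (Fin n) → ℤ := Pi.single s(i, j) 1

lemma e_comm (i j : Fin n) : e n i j = e n j i := by
  unfold e; rw [Sym2.eq_swap]

/-- `[ij|ij] = e_{ii} + e_{jj} - 2 e_{ij}`. -/
def minorVec (i j : Fin n) : Sym2 (Fin n) → ℤ := e n i i + e n j j - 2 • e n i j

/-- The principal minor lattice `L'_n`. -/
def L'lat : Submodule ℤ (Sym2 (Fin n) → ℤ) :=
  Submodule.span ℤ {v | ∃ i j : Fin n, i < j ∧ v = minorVec n i j}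

/-- the last index `n` (zero-based: `n-1`) of `Fin n`. -/
def lastIdx (hn : 0 < n) : Fin n := ⟨n - 1, Nat.sub_lt hn one_pos⟩

/-- embedding `[n-1] → [n]`. -/
def ι : Fin (n - 1) → Fin n := Fin.castLE (Nat.sub_le n 1)

/-- `[in|jn] = e_{ij} + e_{nn} - e_{in} - e_{jn}` for `i,j ∈ [n-1]`. -/
def Bvec (hn : 0 < n) : Sym2 (Fin (n - 1)) → (Sym2 (Fin n) → ℤ) :=
  Sym2.lift ⟨fun i j =>
      e n (ι n i) (ι n j) + e n (lastIdx n hn) (lastIdx n hn)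
        - e n (ι n i) (lastIdx n hn) - e n (ι n j) (lastIdx n hn),
    fun i j => by dsimp only; rw [e_comm n (ι n i) (ι n j)]; ring⟩

/-- The family `B'`: `[in|in]` on the diagonal, `2[in|jn]` off it. -/
noncomputable def B'vec (hn : 0 < n) (s : Sym2 (Fin (n - 1))) : Sym2 (Fin n) → ℤ :=
  if s.IsDiag then Bvec n hn s else 2 • Bvec n hn s

/-- multiplicity (as ℕ) of the index `i` in the unordered pair `s`. -/
def wtN (s : Sym2 (Fin n)) : Fin n → ℕ :=
  Sym2.lift ⟨fun a b i => (if i = a then 1 else 0) + (if i = b then 1 else 0),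
    fun a b => funext fun i => add_comm _ _⟩ s

/-- The Veronese degree of an exponent vector `u ∈ ℕ^P`. -/
def VN (u : Sym2 (Fin n) →₀ ℕ) : Fin n → ℕ := fun i => ∑ s : Sym2 (Fin n), u s * wtN n s i

/-- The fiber `V_n^{-1}[b] = {u ∈ ℕ^P : V_n u = b}`. -/
def fiber (b : Fin n → ℕ) : Set (Sym2 (Fin n) →₀ ℕ) := {u | VN n u = b}

/-- natural inclusion `ℕ^P → ℤ^P`. -/
def toZ (u : Sym2 (Fin n) →₀ ℕ) : Sym2 (Fin n) → ℤ := fun s => (u s : ℤ)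

lemma fiber_finite (b : Fin n → ℕ) : (fiber n b).Finite := by
  classical
  have hsub : fiber n b ⊆
      ↑(Finset.Iic ((Finsupp.equivFunOnFinite.symm fun _ => ∑ i, b i) : Sym2 (Fin n) →₀ ℕ)) := by
    intro u hu
    simp only [Finset.coe_Iic, Set.mem_Iic, Finsupp.le_def]
    intro s
    induction s using Sym2.ind with
    | _ i j =>
      have h1 : u s(i, j) * wtN n s(i, j) i ≤ VN n u i :=
        Finset.single_le_sum (f := fun s => u s * wtN n s i)
          (fun s _ => Nat.zero_le _) (Finset.mem_univ s(i, j))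
      have h2 : 1 ≤ wtN n s(i, j) i := by
        simp only [wtN, Sym2.lift_mk, if_pos rfl]
        exact Nat.le_add_right 1 _
      have h3 : u s(i, j) ≤ b i := by
        have hb : VN n u i = b i := congrFun hu i
        calc u s(i, j) ≤ u s(i, j) * wtN n s(i, j) i := Nat.le_mul_of_pos_right _ h2
          _ ≤ VN n u i := h1
          _ = b i := hb
      calc u s(i, j) ≤ b i := h3
        _ ≤ ∑ i, b i := Finset.single_le_sum (fun _ _ => Nat.zero_le _) (Finset.mem_univ _)
        _ = (Finsupp.equivFunOnFinite.symm fun _ => ∑ i, b i) s(i, j) := by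
            simp
  exact Set.Finite.subset (Finset.finite_toSet _) hsub

variable (k : Type*) [Field k]

/-- the polynomial ring `k[x_{ij}]`. -/
abbrev R := MvPolynomial (Sym2 (Fin n)) k

/-- The principal minor ideal `J_n`. -/
noncomputable def Jideal : Ideal (R n k) :=
  Ideal.span {f | ∃ i j : Fin n, i < j ∧ f = X s(i, i) * X s(j, j) - X s(i, j) ^ 2}

/-- The map `x_{ij} ↦ t_i t_j`. -/
noncomputable def veroHom : R n k →ₐ[k] MvPolynomial (Fin n) k :=
  aeval fun s => Sym2.lift ⟨fun a b => X a * X b, fun a b => mul_comm _ _⟩ s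

/-- The second Veronese ideal `I_n`. -/
noncomputable def Iideal : Ideal (R n k) := RingHom.ker (veroHom n k)

/-- A ℤ₂-twisting: an automorphism sending each variable to ± itself. -/
def IsTwisting (φ : R n k ≃ₐ[k] R n k) : Prop :=
  ∀ s : Sym2 (Fin n), φ (X s) = X s ∨ φ (X s) = - X s

/-- `f` is V_n-homogeneous of degree `b`. -/
def VHomog (f : R n k) (b : Fin n → ℕ) : Prop := ∀ u ∈ f.support, VN n u = b

/-- The fiber over `b` as a finite set. -/
noncomputable def fiberFinset (b : Fin n → ℕ) : Finset (Sym2 (Fin n) →₀ ℕ) :=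
  (fiber_finite n b).toFinset

/-- generating function of the canonical (0/1 off-diagonal) representatives of
the fiber over `b`. -/
noncomputable def pplusAt (b : Fin n → ℕ) : R n k :=
  ∑ u ∈ (fiberFinset n b).filter (fun u => ∀ s : Sym2 (Fin n), ¬s.IsDiag → u s ≤ 1),
    monomial u (1 : k)

/-- `p⁺_{n,j}` (for `n` odd): fiber over `(n-2,…,n-2) + e_j`. -/
noncomputable def pplusOdd (j : Fin n) : R n k :=
  pplusAt n k fun i => (n - 2) + if i = j then 1 else 0

/-- `p⁺_n` (for `n` even): fiber over `(n-2,…,n-2)`. -/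
noncomputable def pplusEven : R n k :=
  pplusAt n k fun _ => n - 2

/-- `p_n = ∏_{i<j∈[n-1]} (x_{ij} x_{nn} + x_{in} x_{jn})`. -/
noncomputable def pn (hn : 0 < n) : R n k :=
  ∏ p ∈ Finset.univ.filter (fun p : Fin (n - 1) × Fin (n - 1) => p.1 < p.2),
    (X s(ι n p.1, ι n p.2) * X s(lastIdx n hn, lastIdx n hn)
      + X s(ι n p.1, lastIdx n hn) * X s(ι n p.2, lastIdx n hn))


/-- the height (codimension) of an ideal: the infimum of the heights of the primes
containing it. -/
noncomputable def idealHeight {A : Type*} [CommRing A] (I : Ideal A) : ℕ∞ :=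
  ⨅ (P : PrimeSpectrum A) (_ : I ≤ P.asIdeal), Order.height P

/-!
Modulo `J_n` every `x_{ij}` is a square root of `x_{ii} x_{jj}`, so `k[x] / J_n` is integral over
the polynomial ring in the `n` diagonal variables. Adjoining the remaining `c_n` variables one at a
time, each of them satisfies a monic equation modulo `J_n` and so raises the height by at least
one; this gives `c_n ≤ ht J_n`. On the other hand every `t_i` is integral over the image of the
Veronese map, as `t_i²` is the image of `x_{ii}`; hence `n ≤ dim k[x] / I_n`.

For any ideal `J_n ⊆ K ⊆ I_n` these bounds pass to `c_n ≤ ht K` and `n ≤ dim k[x] / K`, while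
`ht K + dim k[x] / K ≤ dim k[x] = c_n + n`, so both are equalities.
-/

section KrullDimension

variable {A B : Type*} [CommRing A] [CommRing B]

theorem idealHeight_eq_height (I : Ideal A) : idealHeight I = I.height := by
  refine le_antisymm ?_ (le_iInf₂ fun P hIP => ?_)
  · rw [Ideal.height_eq_inf_minimalPrimes]
    refine le_iInf₂ fun P hP => ?_
    exact (iInf₂_le (⟨P, hP.isPrime⟩ : PrimeSpectrum A) hP.le).trans_eq
      (PrimeSpectrum.height_eq_orderHeight _).symm
  · exact (Ideal.height_mono hIP).trans_eq P.height_eq_orderHeight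

theorem height_add_ringKrullDim_quotient_le (I : Ideal A) :
    (I.height : WithBot ℕ∞) + ringKrullDim (A ⧸ I) ≤ ringKrullDim A := by
  rw [ringKrullDim_quotient]
  cases isEmpty_or_nonempty (PrimeSpectrum.zeroLocus (I : Set A)) with
  | inl _ => rw [Order.krullDim_eq_bot, WithBot.add_bot]; exact bot_le
  | inr hne =>
    have : Nonempty (PrimeSpectrum A) := hne.map Subtype.val
    rw [Order.krullDim_eq_iSup_coheight_of_nonempty, ← WithBot.coe_add, ENat.add_iSup, ringKrullDim,
      Order.krullDim_eq_iSup_height_add_coheight_of_nonempty, WithBot.coe_le_coe]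
    refine iSup_mono' fun P => ⟨P.1, add_le_add ?_ ?_⟩
    · exact (Ideal.height_mono P.2).trans_eq P.1.height_eq_orderHeight
    · exact Order.coheight_le_coheight_apply_of_strictMono _ (Subtype.strictMono_coe _) P

theorem height_eq_and_ringKrullDim_quotient_eq {I : Ideal A} {a b : ℕ}
    (hA : ringKrullDim A ≤ (a + b : ℕ)) (ha : a ≤ I.height) (hb : b ≤ ringKrullDim (A ⧸ I)) :
    I.height = a ∧ ringKrullDim (A ⧸ I) = b := by
  have hsum := (height_add_ringKrullDim_quotient_le I).trans hA
  generalize ringKrullDim (A ⧸ I) = d at hb hsum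
  generalize I.height = h at ha hsum
  induction d with
  | bot => exact absurd hb (WithBot.bot_lt_coe (b : ℕ∞)).not_ge
  | coe d =>
    replace hsum : h + d ≤ (a + b : ℕ) := by exact_mod_cast hsum
    replace hb : (b : ℕ∞) ≤ d := by exact_mod_cast hb
    lift h to ℕ using ne_top_of_le_ne_top (ENat.natCast_ne_top _) (le_self_add.trans hsum)
    lift d to ℕ using ne_top_of_le_ne_top (ENat.natCast_ne_top _) (le_add_self.trans hsum)
    norm_cast at *
    omega

theorem ringKrullDim_le_of_isIntegral {f : A →+* B} (hf : f.IsIntegral) :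
    ringKrullDim B ≤ ringKrullDim A := by
  let _ := f.toAlgebra
  have : Algebra.IsIntegral A B := ⟨hf⟩
  exact Order.krullDim_le_of_strictMono (PrimeSpectrum.comap f) fun P Q hPQ =>
    Ideal.IsIntegral.comap_lt_comap (R := A) hPQ

theorem ringKrullDim_le_quotient_ker_of_isIntegral {f : A →+* B} (hf : f.IsIntegral) :
    ringKrullDim B ≤ ringKrullDim (A ⧸ RingHom.ker f) :=
  ringKrullDim_le_of_isIntegral (f := RingHom.kerLift f) <|
    RingHom.IsIntegral.tower_top (Ideal.Quotient.mk _) _ hf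

theorem comap_C_map_C (I : Ideal A) :
    (I.map Polynomial.C).comap Polynomial.C = I := by
  refine le_antisymm (fun a ha => ?_) Ideal.le_comap_map
  simpa using Ideal.mem_map_C_iff.1 ha 0

theorem height_le_height_map_C (p : Ideal A) [p.IsPrime] :
    p.height ≤ (p.map Polynomial.C).height := by
  let extend (q : PrimeSpectrum A) : PrimeSpectrum (Polynomial A) :=
    ⟨q.asIdeal.map Polynomial.C, Ideal.isPrime_map_C_of_isPrime⟩
  have extend_strictMono : StrictMono extend :=
    Monotone.strictMono_of_injective (fun _ _ h => Ideal.map_mono h) <|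
      Function.LeftInverse.injective (g := PrimeSpectrum.comap Polynomial.C) fun q =>
        PrimeSpectrum.ext (comap_C_map_C q.asIdeal)
  have := Order.height_le_height_apply_of_strictMono extend extend_strictMono ⟨p, inferInstance⟩
  rwa [← PrimeSpectrum.height_eq_orderHeight, ← PrimeSpectrum.height_eq_orderHeight] at this

theorem height_comap_C_add_one_le_of_monic_mem {P : Ideal (Polynomial A)} [P.IsPrime]
    {p : Polynomial A} (hp : p.Monic) (hpP : p ∈ P) :
    (P.comap Polynomial.C).height + 1 ≤ P.height := by
  have hlt : (P.comap Polynomial.C).map Polynomial.C < P := by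
    refine lt_of_le_of_ne Ideal.map_comap_le fun heq => ?_
    have hcoeff := Ideal.mem_map_C_iff.1 (heq ▸ hpP) p.natDegree
    rw [hp.coeff_natDegree] at hcoeff
    exact Ideal.IsPrime.one_notMem inferInstance hcoeff
  have : ((P.comap Polynomial.C).map Polynomial.C).IsPrime := Ideal.isPrime_map_C_of_isPrime
  calc (P.comap Polynomial.C).height + 1
      ≤ ((P.comap Polynomial.C).map Polynomial.C).height + 1 := by
        gcongr
        exact height_le_height_map_C _
    _ ≤ P.height := Ideal.height_add_one_le_of_lt_of_isPrime hlt

theorem height_ker_comp_C_add_one_le {f : Polynomial A →+* B}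
    (hf : (f.comp Polynomial.C).IsIntegral) :
    (RingHom.ker (f.comp Polynomial.C)).height + 1 ≤ (RingHom.ker f).height := by
  obtain ⟨p, hp, hpX⟩ := hf (f Polynomial.X)
  have hpf : p ∈ RingHom.ker f := by
    rwa [← Polynomial.hom_eval₂, Polynomial.eval₂_C_X] at hpX
  rw [(RingHom.ker f).height_eq_inf_minimalPrimes]
  refine le_iInf₂ fun P hP => ?_
  have := hP.isPrime
  calc (RingHom.ker (f.comp Polynomial.C)).height + 1
      ≤ (P.comap Polynomial.C).height + 1 := by
        rw [← RingHom.comap_ker]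
        gcongr
        exact hP.le
    _ ≤ P.height := height_comap_C_add_one_le_of_monic_mem hp (hP.le hpf)

theorem height_ker_comp_ringEquiv {S : Type*} [CommRing S] (e : S ≃+* A) (f : A →+* B) :
    (RingHom.ker (f.comp e.toRingHom)).height = (RingHom.ker f).height := by
  rw [← RingHom.comap_ker]
  exact e.height_comap _

theorem natCard_le_height_ker {σ : Type*} [Finite σ]
    {f : MvPolynomial σ A →+* B} (hf : (f.comp C).IsIntegral) :
    (Nat.card σ : ℕ∞) ≤ (RingHom.ker f).height := by
  induction σ using Finite.induction_empty_option with
  | @of_equiv σ τ e ih =>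
    let e' := (renameEquiv A e).toRingEquiv
    have hC : (f.comp e'.toRingHom).comp C = f.comp C := by
      ext a
      simp [e']
    rw [← Nat.card_congr e, ← height_ker_comp_ringEquiv e' f]
    exact ih (by rwa [hC])
  | h_empty => simp
  | @h_option σ _ ih =>
    let e := (optionEquivLeft A σ).symm.toRingEquiv
    let g : Polynomial (MvPolynomial σ A) →+* B := f.comp e.toRingHom
    have hC : (g.comp Polynomial.C).comp C = f.comp C := by
      ext a
      simp [g, e]
    have hg : ((g.comp Polynomial.C).comp C).IsIntegral := hC ▸ hf
    rw [Finite.card_option, ← height_ker_comp_ringEquiv e, Nat.cast_add_one]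
    calc (Nat.card σ + 1 : ℕ∞) ≤ (RingHom.ker (g.comp Polynomial.C)).height + 1 := by
          gcongr
          exact ih hg
      _ ≤ (RingHom.ker g).height := height_ker_comp_C_add_one_le (hg.tower_top _ _)

theorem natCard_compl_le_height_ker {σ : Type*} (s : Set σ)
    [Finite ↥sᶜ] {f : MvPolynomial σ A →+* B}
    (hf : (f.comp (rename ((↑) : s → σ) : _ →ₐ[A] _).toRingHom).IsIntegral) :
    (Nat.card ↥sᶜ : ℕ∞) ≤ (RingHom.ker f).height := by
  classical
  let e : MvPolynomial ↥sᶜ (MvPolynomial s A) ≃ₐ[A] MvPolynomial σ A :=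
    (sumAlgEquiv A _ _).symm.trans <|
      renameEquiv A ((Equiv.sumComm _ _).trans (Equiv.Set.sumCompl s))
  have hC : (f.comp e.toRingEquiv.toRingHom).comp C =
      f.comp (rename ((↑) : s → σ) : _ →ₐ[A] _).toRingHom := by
    ext a <;> simp [e]
  rw [← height_ker_comp_ringEquiv e.toRingEquiv]
  exact natCard_le_height_ker (by rwa [hC])

theorem isIntegralElem_of_pow {f : A →+* B} {b : B} {m : ℕ} (hm : 0 < m)
    (hb : f.IsIntegralElem (b ^ m)) : f.IsIntegralElem b :=
  let _ := f.toAlgebra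
  IsIntegral.of_pow hm hb

theorem isIntegralElem_of_forall_X {S : Type*} [CommRing S] {σ : Type*}
    {f : A →+* B} {g : MvPolynomial σ S →+* B}
    (hC : ∀ a, f.IsIntegralElem (g (C a))) (hX : ∀ i, f.IsIntegralElem (g (X i)))
    (p : MvPolynomial σ S) : f.IsIntegralElem (g p) := by
  induction p using MvPolynomial.induction_on with
  | C a => exact hC a
  | add p q hp hq => simpa only [map_add] using hp.add f hq
  | mul_X p i hp => simpa only [map_mul] using hp.mul f (hX i)

end KrullDimension

section PrincipalMinors

/-- The principal 2-minor `x_{ii} x_{jj} - x_{ij}²` of a generic symmetric matrix, indexed by the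
unordered pair `s(i, j)`; it is a generator of `J_n` only for `i ≠ j`, being `0` on the diagonal. -/
noncomputable def principalMinor {σ : Type*} (A : Type*) [CommRing A] :
    Sym2 σ → MvPolynomial (Sym2 σ) A :=
  Sym2.lift ⟨fun i j => X s(i, i) * X s(j, j) - X s(i, j) ^ 2, fun i j => by
    dsimp only
    rw [Sym2.eq_swap (a := i) (b := j), mul_comm]⟩

theorem Jideal_eq_span_range_principalMinor :
    Jideal n k =
      Ideal.span (Set.range fun s : {s : Sym2 (Fin n) // ¬ s.IsDiag} => principalMinor k s.1) := by
  refine congrArg Ideal.span (Set.Subset.antisymm ?_ ?_)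
  · rintro _ ⟨i, j, hij, rfl⟩
    exact ⟨⟨s(i, j), by simpa using hij.ne⟩, rfl⟩
  · rintro _ ⟨⟨⟨i, j⟩, hij⟩, rfl⟩
    rcases lt_or_gt_of_ne (mt Sym2.mk_isDiag_iff.2 hij) with h | h
    · exact ⟨i, j, h, rfl⟩
    · exact ⟨j, i, h, congrArg (principalMinor k) Sym2.eq_swap⟩

theorem natCard_not_isDiag : Nat.card {s : Sym2 (Fin n) // ¬ s.IsDiag} = c n := by
  rw [Nat.card_eq_fintype_card, Sym2.card_subtype_not_diag, Fintype.card_fin, c]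

theorem exists_Jideal_eq_span_range :
    ∃ g : Fin (c n) → R n k, Jideal n k = Ideal.span (Set.range g) := by
  let index := Finite.equivFinOfCardEq (natCard_not_isDiag n)
  refine ⟨fun i => principalMinor k (index.symm i).1, ?_⟩
  rw [Jideal_eq_span_range_principalMinor]
  exact congrArg Ideal.span (index.symm.surjective.range_comp _).symm

theorem Jideal_le_Iideal : Jideal n k ≤ Iideal n k := by
  refine Ideal.span_le.2 ?_
  rintro _ ⟨i, j, -, rfl⟩
  simp only [Iideal, SetLike.mem_coe, RingHom.mem_ker, veroHom, map_sub, map_mul, map_pow,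
    aeval_X, Sym2.lift_mk]
  ring

theorem ringKrullDim_R : ringKrullDim (R n k) = (c n + n : ℕ) := by
  rw [MvPolynomial.ringKrullDim_of_isNoetherianRing, ringKrullDim_eq_zero_of_field,
    Nat.card_eq_fintype_card, Sym2.card, Fintype.card_fin, Nat.choose_succ_succ,
    Nat.choose_one_right, zero_add, add_comm, c]

theorem mk_X_sq_eq_mk_diag (i j : Fin n) :
    Ideal.Quotient.mk (Jideal n k) (X s(i, j) ^ 2) =
      Ideal.Quotient.mk (Jideal n k) (X s(i, i) * X s(j, j)) := by
  rw [eq_comm, Ideal.Quotient.eq]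
  rcases lt_trichotomy i j with h | rfl | h
  · exact Ideal.subset_span ⟨i, j, h, rfl⟩
  · simp [sq]
  · exact Ideal.subset_span ⟨j, i, h, by rw [mul_comm, Sym2.eq_swap (a := i) (b := j)]⟩

theorem isIntegral_mk_Jideal_comp_rename_isDiag :
    ((Ideal.Quotient.mk (Jideal n k)).comp
      (rename ((↑) : {s : Sym2 (Fin n) | s.IsDiag} → Sym2 (Fin n)) :
        _ →ₐ[k] R n k).toRingHom).IsIntegral := by
  intro y
  obtain ⟨p, rfl⟩ := Ideal.Quotient.mk_surjective y
  refine isIntegralElem_of_forall_X (fun a => ?_) (fun s => ?_) p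
  · convert! RingHom.isIntegralElem_map _ (x := C a) using 1
    simp
  · induction s with | _ i j
    let diag (i : Fin n) : {s : Sym2 (Fin n) | s.IsDiag} := ⟨s(i, i), rfl⟩
    refine isIntegralElem_of_pow two_pos ?_
    rw [← map_pow, mk_X_sq_eq_mk_diag]
    convert! RingHom.isIntegralElem_map _ (x := X (diag i) * X (diag j)) using 1
    simp [diag]

theorem c_le_height_Jideal : (c n : ℕ∞) ≤ (Jideal n k).height := by
  rw [← Ideal.mk_ker (I := Jideal n k), ← natCard_not_isDiag n]
  exact natCard_compl_le_height_ker _ (isIntegral_mk_Jideal_comp_rename_isDiag n k)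

theorem isIntegral_veroHom : (veroHom n k).toRingHom.IsIntegral := by
  refine isIntegralElem_of_forall_X (g := RingHom.id _) (fun a => ?_) (fun i => ?_)
  · convert! RingHom.isIntegralElem_map _ (x := C a) using 1
    simp
  · refine isIntegralElem_of_pow two_pos ?_
    convert! RingHom.isIntegralElem_map _ (x := X s(i, i)) using 1
    simp [veroHom, sq]

theorem le_ringKrullDim_quotient_Iideal : n ≤ ringKrullDim (R n k ⧸ Iideal n k) := by
  calc (n : WithBot ℕ∞) = ringKrullDim (MvPolynomial (Fin n) k) := by
        rw [MvPolynomial.ringKrullDim_of_isNoetherianRing, ringKrullDim_eq_zero_of_field,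
          Nat.card_eq_fintype_card, Fintype.card_fin, zero_add]
    _ ≤ ringKrullDim (R n k ⧸ Iideal n k) :=
        ringKrullDim_le_quotient_ker_of_isIntegral (isIntegral_veroHom n k)

theorem height_eq_c_and_ringKrullDim_quotient_eq {K : Ideal (R n k)} (hJK : Jideal n k ≤ K)
    (hKI : K ≤ Iideal n k) : K.height = c n ∧ ringKrullDim (R n k ⧸ K) = n :=
  height_eq_and_ringKrullDim_quotient_eq (ringKrullDim_R n k).le
    ((c_le_height_Jideal n k).trans (Ideal.height_mono hJK))
    ((le_ringKrullDim_quotient_Iideal n k).trans <|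
      ringKrullDim_le_of_surjective _ (Ideal.Quotient.factor_surjective hKI))

end PrincipalMinors

/-- `J_n` is a complete intersection: it is generated by the `c_n`
principal 2-minors and has height exactly `c_n`; equivalently `dim k[x]/J_n = n`, which
is also the height of `I_n`, so `J_n ⊆ I_n` is a complete intersection of the same
codimension. -/
theorem principal_minor_ideal_complete_intersection (n : ℕ) (hn : 2 ≤ n)
    (k : Type*) [Field k] :
    (∃ g : Fin (c n) → R n k, Jideal n k = Ideal.span (Set.range g)) ∧
    idealHeight (Jideal n k) = (c n : ℕ∞) ∧
    ringKrullDim (R n k ⧸ Jideal n k) = (n : WithBot (WithTop ℕ)) ∧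
    idealHeight (Iideal n k) = (c n : ℕ∞) ∧
    Jideal n k ≤ Iideal n k := by
  have hJI := Jideal_le_Iideal n k
  obtain ⟨height_J, dim_J⟩ := height_eq_c_and_ringKrullDim_quotient_eq n k le_rfl hJI
  obtain ⟨height_I, -⟩ := height_eq_c_and_ringKrullDim_quotient_eq n k hJI le_rfl
  rw [idealHeight_eq_height, idealHeight_eq_height]
  exact ⟨exists_Jideal_eq_span_range n k, height_J, dim_J, height_I, hJI⟩

end Veronese
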